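/- Every multipartite entanglement witness can be obtained from the lifting construction: if W is a Hermitian operator on (ℂ^d)^{⊗k} with Tr(Wσ) ≥ 0 for every biseparable state σ and Tr(Wρ₀) = 0 for some biseparable state ρ₀ (a weakly optimal GME witness), then there exist a Hermitian operator Q and, for each bipartition {b|b̄}, a Hermitian operator T_b, such that each Q + T_b is a weakly optimal witness for the bipartition {b|b̄} and W = Q + Σ_b [T_b]_+. -/

import Mathlib

/-!
One may take `Q = W`. For each bipartition `b`, the expectation
of `W` attains its minimum `m_b` over `SepAcross d b`, since it is affine and the pure product
states are a compact set (`exists_min_prodPure`). Because `W` is nonnegative on biseparable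
states, `0 ≤ m_b`, so `T_b = -m_b • 1` is negative semidefinite and has zero positive part
(`matPosPart_eq_zero`). Separable states have unit trace, so `Q + T_b = W - m_b • 1` has
expectation `Tr (W σ) - m_b`, which is nonnegative on `SepAcross d b` and vanishes at a minimiser.
-/

open scoped ComplexOrder

noncomputable section

/-- Index type for `(ℂ^d)^{⊗ k}`. -/
abbrev MIdx (k d : ℕ) := Fin k → Fin d

/-- Operators on `(ℂ^d)^{⊗ k}`. -/
abbrev MOp (k d : ℕ) := Matrix (MIdx k d) (MIdx k d) ℂ

/-- A bipartition of the `k` subsystems is a nonempty proper subset. -/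
def IsBipartition {k : ℕ} (b : Finset (Fin k)) : Prop := b.Nonempty ∧ b ≠ Finset.univ

/-- The finset of all bipartitions. -/
def bipartitions (k : ℕ) : Finset (Finset (Fin k)) :=
  Finset.univ.filter fun b => b.Nonempty ∧ b ≠ Finset.univ

/-- Index type of the subsystems in `b`. -/
abbrev SubIdx {k : ℕ} (d : ℕ) (b : Finset (Fin k)) := {i : Fin k // i ∈ b} → Fin d

/-- Index type of the subsystems in the complement of `b`. -/
abbrev CoIdx {k : ℕ} (d : ℕ) (b : Finset (Fin k)) := {i : Fin k // i ∉ b} → Fin d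

def restr {k d : ℕ} (b : Finset (Fin k)) (x : MIdx k d) : SubIdx d b := fun i => x i
def corestr {k d : ℕ} (b : Finset (Fin k)) (x : MIdx k d) : CoIdx d b := fun i => x i

/-- The pure product state `|φ⟩⟨φ| ⊗ |ψ⟩⟨ψ|` across the bipartition `{b|b̄}`. -/
def prodPure {k d : ℕ} (b : Finset (Fin k)) (φ : SubIdx d b → ℂ) (ψ : CoIdx d b → ℂ) :
    MOp k d := fun x y =>
  φ (restr b x) * ψ (corestr b x) * star (φ (restr b y)) * star (ψ (corestr b y))

/-- States separable across the bipartition `{b|b̄}`. -/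
def SepAcross {k : ℕ} (d : ℕ) (b : Finset (Fin k)) : Set (MOp k d) :=
  convexHull ℝ {M | ∃ (φ : SubIdx d b → ℂ) (ψ : CoIdx d b → ℂ),
    (∑ x, ‖φ x‖ ^ 2 = 1) ∧ (∑ y, ‖ψ y‖ ^ 2 = 1) ∧ M = prodPure b φ ψ}

/-- Biseparable states: the convex hull of the union of the separable sets over all
bipartitions. -/
def Biseparable (k d : ℕ) : Set (MOp k d) :=
  convexHull ℝ (⋃ b ∈ bipartitions k, SepAcross d b)

/-- A state: positive semidefinite with unit trace. -/
def IsState {n : Type*} [Fintype n] (ρ : Matrix n n ℂ) : Prop :=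
  ρ.PosSemidef ∧ ρ.trace = 1

/-- The positive part `[A]_+` of a Hermitian matrix `A` (junk value `0` otherwise). -/
noncomputable def matPosPart {n : Type*} [Fintype n] [DecidableEq n] (A : Matrix n n ℂ) :
    Matrix n n ℂ :=
  if hA : A.IsHermitian then
    (hA.eigenvectorUnitary : Matrix n n ℂ) *
      Matrix.diagonal (fun i => ((max (hA.eigenvalues i) 0 : ℝ) : ℂ)) *
      star (hA.eigenvectorUnitary : Matrix n n ℂ)
  else 0

/-- `A ⪰ B` in the positive semidefinite (Loewner) order. -/
def Loewner {n : Type*} [Fintype n] (A B : Matrix n n ℂ) : Prop := (A - B).PosSemidef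

end

/-- A weakly optimal entanglement witness for the bipartition `{b|b̄}`:
a Hermitian operator with nonnegative expectation on all states separable across the
bipartition, which vanishes on some such state. -/
def WeaklyOptimalWitness {k : ℕ} (d : ℕ) (b : Finset (Fin k)) (W : MOp k d) : Prop :=
  W.IsHermitian ∧ (∀ σ ∈ SepAcross d b, 0 ≤ ((W * σ).trace).re) ∧
    ∃ σ ∈ SepAcross d b, ((W * σ).trace).re = 0

theorem matPosPart_eq_zero {n : Type*} [Fintype n] [DecidableEq n] (A : Matrix n n ℂ)
    (h : (-A).PosSemidef) : matPosPart A = 0 := by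
  unfold matPosPart
  split_ifs with hA
  · have hev : ∀ i, max (hA.eigenvalues i) 0 = 0 := by
      intro i
      apply max_eq_right
      rw [hA.eigenvalues_eq]
      have := h.re_dotProduct_nonneg (𝕜 := ℂ) (hA.eigenvectorBasis i)
      simp only [Matrix.neg_mulVec, dotProduct_neg, map_neg] at this
      linarith
    simp [hev]
  · rfl

theorem isCompact_unitVectors (ι : Type*) [Fintype ι] :
    IsCompact {φ : ι → ℂ | ∑ x, ‖φ x‖ ^ 2 = 1} := by
  refine (isCompact_closedBall (0 : ι → ℂ) 1).of_isClosed_subset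
    (isClosed_eq (by fun_prop) continuous_const) ?_
  intro φ hφ
  rw [mem_closedBall_zero_iff, pi_norm_le_iff_of_nonneg zero_le_one]
  intro i
  have h1 : ‖φ i‖ ^ 2 ≤ ∑ x, ‖φ x‖ ^ 2 :=
    Finset.single_le_sum (f := fun x => ‖φ x‖ ^ 2) (fun _ _ => by positivity) (Finset.mem_univ i)
  rw [hφ.out] at h1
  exact (sq_le_one_iff₀ (norm_nonneg _)).1 h1

theorem nonempty_unitVectors (ι : Type*) [Fintype ι] [Nonempty ι] :
    {φ : ι → ℂ | ∑ x, ‖φ x‖ ^ 2 = 1}.Nonempty := by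
  classical
  refine ⟨Pi.single (Classical.arbitrary ι) 1, ?_⟩
  rw [Set.mem_ofPred_eq, Finset.sum_eq_single (Classical.arbitrary ι)]
  · simp
  · intro j _ hj
    simp [Pi.single_eq_of_ne hj]
  · simp

theorem trace_prodPure {k d : ℕ} (b : Finset (Fin k)) (φ : SubIdx d b → ℂ) (ψ : CoIdx d b → ℂ)
    (hφ : ∑ x, ‖φ x‖ ^ 2 = 1) (hψ : ∑ y, ‖ψ y‖ ^ 2 = 1) : (prodPure b φ ψ).trace = 1 := by
  have h1 : (prodPure b φ ψ).trace
      = ∑ x : MIdx k d, ((‖φ (restr b x)‖ ^ 2 * ‖ψ (corestr b x)‖ ^ 2 : ℝ) : ℂ) := by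
    refine Finset.sum_congr rfl fun x _ => ?_
    simp only [Matrix.diag_apply, prodPure]
    push_cast
    rw [← Complex.mul_conj', ← Complex.mul_conj']
    simp only [Complex.star_def]
    ring
  have h2 : ∑ x : MIdx k d, ‖φ (restr b x)‖ ^ 2 * ‖ψ (corestr b x)‖ ^ 2 = 1 := by
    have := (Equiv.piEquivPiSubtypeProd (fun i => i ∈ b) (fun _ => Fin d)).sum_comp
      (fun p => ‖φ p.1‖ ^ 2 * ‖ψ p.2‖ ^ 2)
    refine this.trans ?_
    rw [Fintype.sum_prod_type]
    simp only [← Finset.mul_sum, hψ, mul_one, hφ]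
  rw [h1, ← Complex.ofReal_sum, h2, Complex.ofReal_one]

/-- The expectation of `W` attains its minimum over the compact set of pure product states. -/
theorem exists_min_prodPure {k d : ℕ} (hd : 2 ≤ d) (b : Finset (Fin k)) (W : MOp k d) :
    ∃ (φ : SubIdx d b → ℂ) (ψ : CoIdx d b → ℂ),
      (∑ x, ‖φ x‖ ^ 2 = 1) ∧ (∑ y, ‖ψ y‖ ^ 2 = 1) ∧
      ∀ (φ' : SubIdx d b → ℂ) (ψ' : CoIdx d b → ℂ),
        (∑ x, ‖φ' x‖ ^ 2 = 1) → (∑ y, ‖ψ' y‖ ^ 2 = 1) →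
        ((W * prodPure b φ ψ).trace).re ≤ ((W * prodPure b φ' ψ').trace).re := by
  have : Nonempty (Fin d) := ⟨⟨0, by omega⟩⟩
  have hcont : Continuous fun p : (SubIdx d b → ℂ) × (CoIdx d b → ℂ) =>
      ((W * prodPure b p.1 p.2).trace).re := by
    simp only [Matrix.trace, Matrix.diag_apply, Matrix.mul_apply, prodPure]
    fun_prop
  obtain ⟨p, hp, hmin⟩ := ((isCompact_unitVectors (SubIdx d b)).prod
    (isCompact_unitVectors (CoIdx d b))).exists_isMinOn
    ((nonempty_unitVectors _).prod (nonempty_unitVectors _)) hcont.continuousOn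
  exact ⟨p.1, p.2, hp.1, hp.2, fun φ' ψ' h1 h2 => hmin (a := (φ', ψ')) ⟨h1, h2⟩⟩

/-- Nonnegativity of the expectation of `A` on pure product states persists on their convex
hull. -/
theorem expectation_nonneg_of_sepAcross {k d : ℕ} (b : Finset (Fin k)) (A : MOp k d)
    (h : ∀ (φ : SubIdx d b → ℂ) (ψ : CoIdx d b → ℂ),
        (∑ x, ‖φ x‖ ^ 2 = 1) → (∑ y, ‖ψ y‖ ^ 2 = 1) → 0 ≤ ((A * prodPure b φ ψ).trace).re)
    (σ : MOp k d) (hσ : σ ∈ SepAcross d b) : 0 ≤ ((A * σ).trace).re := by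
  have hlin : IsLinearMap ℝ fun M : MOp k d => ((A * M).trace).re :=
    ⟨fun x y => by simp [mul_add], fun c x => by simp⟩
  refine convexHull_min ?_ (convex_halfSpace_ge hlin 0) hσ
  rintro M ⟨φ, ψ, h1, h2, rfl⟩
  exact h φ ψ h1 h2

/-- Every weakly optimal witness `W` for genuine multipartite
entanglement arises from the lifting construction: `W = Q + ∑_b [T_b]_+` where each
`Q + T_b` is a weakly optimal witness for the bipartition `{b|b̄}`. -/
theorem every_GME_witness_from_lifting
    (k d : ℕ) (hk : 2 ≤ k) (hd : 2 ≤ d)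
    (W : MOp k d) (hW : W.IsHermitian)
    (hpos : ∀ σ ∈ Biseparable k d, 0 ≤ ((W * σ).trace).re)
    (hopt : ∃ ρ₀ ∈ Biseparable k d, ((W * ρ₀).trace).re = 0) :
    ∃ (Q : MOp k d) (T : Finset (Fin k) → MOp k d),
      Q.IsHermitian ∧
      (∀ b ∈ bipartitions k, (T b).IsHermitian) ∧
      (∀ b ∈ bipartitions k, WeaklyOptimalWitness d b (Q + T b)) ∧
      W = Q + ∑ b ∈ bipartitions k, matPosPart (T b) := by
  choose φ ψ hφ hψ hmin using fun b : Finset (Fin k) => exists_min_prodPure hd b W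
  have hsep : ∀ b, prodPure b (φ b) (ψ b) ∈ SepAcross d b := fun b =>
    subset_convexHull ℝ _ ⟨φ b, ψ b, hφ b, hψ b, rfl⟩
  set m : Finset (Fin k) → ℝ := fun b => ((W * prodPure b (φ b) (ψ b)).trace).re with hm
  have hm0 : ∀ b ∈ bipartitions k, 0 ≤ m b := fun b hb =>
    hpos _ (subset_convexHull ℝ _ (Set.mem_biUnion hb (hsep b)))
  have hT : ∀ b, (-((m b : ℂ) • (1 : MOp k d))).IsHermitian := by
    intro b
    simp [Matrix.IsHermitian, Matrix.conjTranspose_smul]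
  have hexp : ∀ b φ' ψ', (∑ x, ‖φ' x‖ ^ 2 = 1) → (∑ y, ‖ψ' y‖ ^ 2 = 1) →
      (((W + -((m b : ℂ) • (1 : MOp k d))) * prodPure b φ' ψ').trace).re
        = ((W * prodPure b φ' ψ').trace).re - m b := by
    intro b φ' ψ' h1 h2
    simp [add_mul, trace_prodPure b φ' ψ' h1 h2, sub_eq_add_neg]
  refine ⟨W, fun b => -((m b : ℂ) • (1 : MOp k d)), hW, fun b _ => hT b, fun b _ => ?_, ?_⟩
  · refine ⟨hW.add (hT b), expectation_nonneg_of_sepAcross b _ fun φ' ψ' h1 h2 => ?_,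
      _, hsep b, ?_⟩
    · rw [hexp b φ' ψ' h1 h2, sub_nonneg]
      exact hmin b φ' ψ' h1 h2
    · rw [hexp b _ _ (hφ b) (hψ b), sub_self]
  · rw [Finset.sum_eq_zero, add_zero]
    intro b hb
    apply matPosPart_eq_zero
    rw [neg_neg]
    exact Matrix.PosSemidef.one.smul (by exact_mod_cast hm0 b hb)
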